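/- Let D be either D^(0) or D^{((1,0))}. For all multi-indices γ', γ: if D_{γ'}^γ ≠ 0 then γ ≺ γ' and |γ| ≤ |γ'| + 1 − α. -/

import Mathlib

open Finsupp

noncomputable section

/-- The index set `I`: symbols `z_k` for `k : ℕ` (left summand) and `z_n` for
`n ∈ ℕ² \ {(0,0)}` (right summand). -/
abbrev RSIdx : Type := ℕ ⊕ {n : ℕ × ℕ // n ≠ (0, 0)}

/-- Multi-indices: finitely supported functions from the index set to `ℕ`. -/
abbrev MIdx : Type := RSIdx →₀ ℕ

/-- The unit multi-index `e_k`. -/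
def eK (k : ℕ) : MIdx := Finsupp.single (Sum.inl k) 1

/-- The unit multi-index `e_n` for `n ≠ (0,0)`. -/
def eN (n : {n : ℕ × ℕ // n ≠ (0, 0)}) : MIdx := Finsupp.single (Sum.inr n) 1

/-- The scaled length `[β] = Σ_k k·β(k) − Σ_{n≠(0,0)} β(n)`. -/
def slen (β : MIdx) : ℤ :=
  β.sum fun i m =>
    match i with
    | Sum.inl k => (k : ℤ) * (m : ℤ)
    | Sum.inr _ => -(m : ℤ)

/-- The parabolic length `|n| = n₁ + 2 n₂` of `n ∈ ℕ²`. -/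
def plen (n : ℕ × ℕ) : ℕ := n.1 + 2 * n.2

/-- The polynomial part `|β|_p = Σ_{n≠(0,0)} |n|·β(n)`. -/
def polyPart (β : MIdx) : ℕ :=
  β.sum fun i m =>
    match i with
    | Sum.inl _ => 0
    | Sum.inr n => plen n.val * m

/-- The homogeneity `|β| = α(1+[β]) + |β|_p`. -/
def homog (α : ℝ) (β : MIdx) : ℝ := α * (1 + (slen β : ℝ)) + (polyPart β : ℝ)

/-- `β` is purely polynomial iff `β = e_n` for some `n ≠ (0,0)`. -/
def PurelyPoly (β : MIdx) : Prop := ∃ n, β = eN n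

/-- `β` is populated iff it is purely polynomial or `[β] ≥ 0`. -/
def Populated (β : MIdx) : Prop := PurelyPoly β ∨ 0 ≤ slen β

/-- The ordinal `|β|_≺ = [β] + (1/2)|β|_p + (1/4)β(0)`. -/
def precNorm (β : MIdx) : ℝ :=
  (slen β : ℝ) + (polyPart β : ℝ) / 2 + (β (Sum.inl 0) : ℝ) / 4

open Classical in
/-- The matrix entry `(D^(0))_β^γ` of the derivation
`D^(0) = Σ_k (k+1) z_{k+1} ∂_{z_k}`: it is `(k+1)·γ(k)` if there exists `k` with
`γ + e_{k+1} = β + e_k` (such `k` is unique), and `0` otherwise. -/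
def D0 (β γ : MIdx) : ℕ :=
  if h : ∃ k : ℕ, γ + eK (k + 1) = β + eK k then
    (h.choose + 1) * γ (Sum.inl h.choose)
  else 0

open Classical in
/-- The matrix entry of `D^(n)` for `n ∈ ℕ²`, where `D^((0,0))` means `D^(0)` and,
for `n ≠ (0,0)`, `(D^(n))_β^γ = β(n) + 1` if `γ = β + e_n`, and `0` otherwise. -/
def DMat (n : ℕ × ℕ) : MIdx → MIdx → ℕ :=
  if hn : n = (0, 0) then D0
  else fun β γ =>
    if γ = β + eN ⟨n, hn⟩ then β (Sum.inr ⟨n, hn⟩) + 1 else 0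

/-- Composition of two `ℕ`-valued matrices indexed by multi-indices; the sum over the
intermediate multi-index is well-defined (by row-finiteness) as a `finsum`. -/
def matMul (A B : MIdx → MIdx → ℕ) : MIdx → MIdx → ℕ :=
  fun β γ => ∑ᶠ δ : MIdx, A β δ * B δ γ

open Classical in
/-- The identity matrix. -/
def matId : MIdx → MIdx → ℕ := fun β γ => if γ = β then 1 else 0

/-- Composition of a list of matrices. -/
def matProd : List (MIdx → MIdx → ℕ) → MIdx → MIdx → ℕ
  | [] => matId
  | A :: l => matMul A (matProd l)

/-- The `l`-fold matrix power of `D^(0)`. -/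
def D0pow : ℕ → MIdx → MIdx → ℕ
  | 0 => matId
  | l + 1 => matMul D0 (D0pow l)

theorem slen_add_aux (a b : MIdx) : slen (a + b) = slen a + slen b := by
  unfold slen
  apply Finsupp.sum_add_index'
  · rintro (k | n) <;> simp
  · rintro (k | n) x y
    · simp [mul_add]
    · simp [add_comm]

theorem poly_add_aux (a b : MIdx) : polyPart (a + b) = polyPart a + polyPart b := by
  unfold polyPart
  apply Finsupp.sum_add_index'
  · rintro (k | n) <;> simp
  · rintro (k | n) x y
    · simp
    · simp [mul_add]

theorem slen_eK_aux (k : ℕ) : slen (eK k) = k := by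
  unfold slen eK
  rw [Finsupp.sum_single_index] <;> simp

theorem poly_eK_aux (k : ℕ) : polyPart (eK k) = 0 := by
  unfold polyPart eK
  rw [Finsupp.sum_single_index] <;> simp

theorem slen_eN_aux (n) : slen (eN n) = -1 := by
  unfold slen eN
  rw [Finsupp.sum_single_index] <;> simp

theorem poly_eN_aux (n) : polyPart (eN n) = plen n.val := by
  unfold polyPart eN
  rw [Finsupp.sum_single_index] <;> simp

/-- For `D ∈ {D^(0), D^((1,0))}` and all multi-indices `γ'`, `γ`: if `D_{γ'}^γ ≠ 0`
then `γ ≺ γ'` and `|γ| ≤ |γ'| + 1 − α`. -/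
theorem statement17 (α : ℝ) (D : MIdx → MIdx → ℕ)
    (hD : D = D0 ∨ D = DMat (1, 0)) (γ' γ : MIdx) (h : D γ' γ ≠ 0) :
    precNorm γ < precNorm γ' ∧ homog α γ ≤ homog α γ' + 1 - α := by
  rcases hD with rfl | rfl
  · unfold D0 at h
    split_ifs at h with hk
    · obtain ⟨k, hk⟩ := hk
      have h1 := congrArg slen hk
      have h2 := congrArg polyPart hk
      have h3 := DFunLike.congr_fun hk (Sum.inl 0)
      simp only [slen_add_aux, slen_eK_aux, poly_add_aux, poly_eK_aux] at h1 h2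
      have h4 : γ (Sum.inl 0) ≤ γ' (Sum.inl 0) + 1 := by
        have h5 : eK k (Sum.inl 0) ≤ 1 := by
          unfold eK
          rw [Finsupp.single_apply]
          split_ifs <;> simp
        simp only [Finsupp.add_apply] at h3
        omega
      have h1' : slen γ' = slen γ + 1 := by push_cast at h1; linarith
      have h2' : polyPart γ = polyPart γ' := by simpa using h2
      have h4' : (γ (Sum.inl 0) : ℝ) ≤ γ' (Sum.inl 0) + 1 := by exact_mod_cast h4
      unfold precNorm homog
      rw [h1', h2']
      push_cast
      constructor <;> linarith
    · exact absurd rfl h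
  · have hn : ((1, 0) : ℕ × ℕ) ≠ (0, 0) := by simp
    unfold DMat at h
    rw [dif_neg hn] at h
    have hg : γ = γ' + eN ⟨(1, 0), hn⟩ := by
      by_contra hc
      simp only [if_neg hc] at h
      exact h rfl
    subst hg
    have h0 : (γ' + eN ⟨(1, 0), hn⟩) (Sum.inl 0) = γ' (Sum.inl 0) := by
      simp [eN]
    unfold precNorm homog
    rw [h0, slen_add_aux, poly_add_aux, slen_eN_aux, poly_eN_aux]
    simp only [plen]
    push_cast
    constructor <;> linarith
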